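/- arXiv:1901.07740 — 4 statements merged into one kernel-verified Lean document; each statement's English description precedes it below -/
import Mathlib

section
/- Let n, m be natural numbers, let ℍ denote the real quaternions with quaternion unit i, let X₁ be an n×m matrix and X₂ an m×n matrix with quaternion entries. Then the following are equivalent: (a) for all u₀, v₀ ∈ ℍⁿ and all u₁, v₁ ∈ ℍ^m one has (star v₀)ᵗ (X₁ u₁) + (star v₁)ᵗ (i·(X₂ u₀)) = (star (X₁ v₁))ᵗ u₀ − (star (X₂ v₀))ᵗ (i·u₁); (b) X₂ = −i · X₁*, where X₁* is the quaternionic conjugate transpose of X₁ and star is quaternionic conjugation applied entrywise. -/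
open Matrix Quaternion
open scoped Quaternion

/-!
Testing the superadjointness condition on `u₁ = 0`, `v₀ = 0` and on `u₀ = 0`, `v₁ = 0` splits it
into the two matrix identities `G₁ X₂ = X₁* G₀` and `G₀ X₁ = -X₂* G₁`. As `G₀` is hermitian and
`G₁` skew-hermitian, each of them is the conjugate transpose of the other, so one remains, and it
can be solved for `X₂` because `G₁` is invertible. Here `G₀ = 1` and `G₁ = i · 1`, with
inverse `-i · 1`.
-/

section OddPart

variable {R m n : Type*} [Fintype m] [Fintype n]

theorem star_mulVec_dotProduct_mulVec {l : Type*} [Fintype l] [NonUnitalSemiring R] [StarRing R]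
    (A : Matrix l m R) (B : Matrix l n R) (v : m → R) (u : n → R) :
    star (A *ᵥ v) ⬝ᵥ (B *ᵥ u) = star v ⬝ᵥ ((Aᴴ * B) *ᵥ u) := by
  rw [star_mulVec, ← dotProduct_mulVec, mulVec_mulVec]

theorem ext_of_star_dotProduct_mulVec [Semiring R] [StarRing R] {A B : Matrix m n R}
    (h : ∀ u v, star v ⬝ᵥ (A *ᵥ u) = star v ⬝ᵥ (B *ᵥ u)) : A = B := by
  classical
  ext i j
  simpa [← Pi.single_star] using h (Pi.single j 1) (Pi.single i 1)

/-- The odd endomorphism `X = [[0, X₁], [X₂, 0]]` of `V = Rⁿ ⊕ Rᵐ` satisfies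
`b(X u, v) = b(u, s X v)`, i.e. belongs to `𝔰(V, b)₁`, where `b(u, v) = v* G u` with
`G = diag(G₀, G₁)` and `s = diag(1, -1)`. The condition is written in the components of
`u = (u₀, u₁)` and `v = (v₀, v₁)`, the minus sign being that of `s X v = (X₁ v₁, -X₂ v₀)`. -/
def IsOddSuperadjoint [NonUnitalRing R] [StarRing R] (G₀ : Matrix n n R) (G₁ : Matrix m m R)
    (X₁ : Matrix n m R) (X₂ : Matrix m n R) : Prop :=
  ∀ (u₀ v₀ : n → R) (u₁ v₁ : m → R),
    star v₀ ⬝ᵥ (G₀ *ᵥ (X₁ *ᵥ u₁)) + star v₁ ⬝ᵥ (G₁ *ᵥ (X₂ *ᵥ u₀))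
      = star (X₁ *ᵥ v₁) ⬝ᵥ (G₀ *ᵥ u₀) - star (X₂ *ᵥ v₀) ⬝ᵥ (G₁ *ᵥ u₁)

theorem mul_eq_neg_conjTranspose_mul_iff [NonUnitalRing R] [StarRing R]
    {G₀ : Matrix n n R} {G₁ : Matrix m m R} (hG₀ : G₀.IsHermitian) (hG₁ : G₁ᴴ = -G₁)
    {X₁ : Matrix n m R} {X₂ : Matrix m n R} :
    G₀ * X₁ = -(X₂ᴴ * G₁) ↔ G₁ * X₂ = X₁ᴴ * G₀ := by
  rw [← conjTranspose_inj, conjTranspose_neg, conjTranspose_mul, conjTranspose_mul,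
    conjTranspose_conjTranspose, hG₀.eq, hG₁, Matrix.neg_mul, neg_neg, eq_comm]

variable [Ring R] [StarRing R]

theorem isOddSuperadjoint_iff_mul_eq_and_mul_eq {G₀ : Matrix n n R} {G₁ : Matrix m m R}
    {X₁ : Matrix n m R} {X₂ : Matrix m n R} :
    IsOddSuperadjoint G₀ G₁ X₁ X₂ ↔ G₀ * X₁ = -(X₂ᴴ * G₁) ∧ G₁ * X₂ = X₁ᴴ * G₀ := by
  simp only [IsOddSuperadjoint, star_mulVec_dotProduct_mulVec, mulVec_mulVec]
  refine ⟨fun h => ⟨ext_of_star_dotProduct_mulVec fun u₁ v₀ => ?_,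
    ext_of_star_dotProduct_mulVec fun u₀ v₁ => ?_⟩, fun ⟨h₁, h₂⟩ u₀ v₀ u₁ v₁ => ?_⟩
  · simpa [neg_mulVec] using h 0 v₀ u₁ 0
  · simpa using h u₀ 0 0 v₁
  · rw [h₁, h₂, neg_mulVec, dotProduct_neg, neg_add_eq_sub]

theorem odd_part_quaternionic_pair_general [DecidableEq m] {G₀ : Matrix n n R}
    {G₁ : Matrix m m R} [Invertible G₁] (hG₀ : G₀.IsHermitian) (hG₁ : G₁ᴴ = -G₁)
    (X₁ : Matrix n m R) (X₂ : Matrix m n R) :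
    IsOddSuperadjoint G₀ G₁ X₁ X₂ ↔ X₂ = ⅟G₁ * (X₁ᴴ * G₀) := by
  rw [isOddSuperadjoint_iff_mul_eq_and_mul_eq, mul_eq_neg_conjTranspose_mul_iff hG₀ hG₁,
    and_self, Matrix.mul_left_eq_iff_eq_invOf_mul]

theorem isOddSuperadjoint_one_iff_of_mul_self_eq_neg_one [DecidableEq m] [DecidableEq n]
    {J : Matrix m m R} (hJ : Jᴴ = -J) (hJJ : J * J = -1)
    (X₁ : Matrix n m R) (X₂ : Matrix m n R) :
    IsOddSuperadjoint 1 J X₁ X₂ ↔ X₂ = -J * X₁ᴴ := by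
  let _ : Invertible J := ⟨-J, by rw [neg_mul, hJJ, neg_neg], by rw [mul_neg, hJJ, neg_neg]⟩
  have hinv : ⅟J = -J := rfl
  rw [odd_part_quaternionic_pair_general isHermitian_one hJ, hinv, Matrix.mul_one]

theorem isOddSuperadjoint_one_diagonal_iff [DecidableEq m] [DecidableEq n] {q : R}
    (hq : star q = -q) (hqq : q * q = -1) (X₁ : Matrix n m R) (X₂ : Matrix m n R) :
    IsOddSuperadjoint 1 (diagonal fun _ => q) X₁ X₂ ↔
      X₂ = .of fun j k => -(q * star (X₁ k j)) := by
  have hskew : (diagonal fun _ : m => q)ᴴ = -diagonal fun _ => q := by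
    simp [diagonal_conjTranspose, Pi.star_def, hq]
  have hsq : (diagonal fun _ : m => q) * (diagonal fun _ => q) = -1 := by
    rw [diagonal_mul_diagonal, hqq, ← diagonal_one, diagonal_neg]
  have hmul : -(diagonal fun _ : m => q) * X₁ᴴ = .of fun j k => -(q * star (X₁ k j)) := by
    ext1 j k
    simp
  rw [isOddSuperadjoint_one_iff_of_mul_self_eq_neg_one hskew hsq, hmul]

end OddPart

/-- Characterization of the odd part of the Lie superalgebra attached to the
dual pair `(U(n,ℍ), O*(m,ℍ))`: with `qi` the quaternion unit `i`, the
superalgebra condition (a) holds if and only if `X₂ = -i · X₁*`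
(quaternionic conjugate transpose). -/
theorem odd_part_quaternionic_pair (n m : ℕ)
    (X₁ : Matrix (Fin n) (Fin m) ℍ[ℝ]) (X₂ : Matrix (Fin m) (Fin n) ℍ[ℝ])
    (qi : ℍ[ℝ]) (hqi : qi = ⟨0, 1, 0, 0⟩) :
    (∀ (u₀ v₀ : Fin n → ℍ[ℝ]) (u₁ v₁ : Fin m → ℍ[ℝ]),
        star v₀ ⬝ᵥ (X₁ *ᵥ u₁) + star v₁ ⬝ᵥ (fun j => qi * (X₂ *ᵥ u₀) j)
          = star (X₁ *ᵥ v₁) ⬝ᵥ u₀ - star (X₂ *ᵥ v₀) ⬝ᵥ (fun j => qi * u₁ j))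
      ↔ X₂ = Matrix.of fun j k => -(qi * star (X₁ k j)) := by
  have hre : qi.re = 0 := by rw [hqi]
  have hnorm : normSq qi = 1 := by rw [normSq_def', hqi]; norm_num
  have hstar : star qi = -qi := star_eq_neg.2 hre
  have hsq : qi * qi = -1 := by rw [← sq, sq_eq_neg_normSq.2 hre, hnorm, coe_one]
  have hdiag (w : Fin m → ℍ[ℝ]) : (fun j => qi * w j) = diagonal (fun _ => qi) *ᵥ w :=
    funext fun j => (mulVec_diagonal (fun _ => qi) w j).symm
  simpa only [IsOddSuperadjoint, one_mulVec, ← hdiag] using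
    isOddSuperadjoint_one_diagonal_iff hstar hsq X₁ X₂
end

section
/- Let W be a finite-dimensional real vector space, ⟨·,·⟩ a bilinear form on W with ⟨w,w⟩ = 0 for all w ∈ W, and J : W → W a linear map with J∘J = −id_W and ⟨Ju,v⟩ + ⟨u,Jv⟩ = 0 for all u,v ∈ W, such that β(u,v) := ⟨Ju,v⟩ is positive definite (β(u,u) > 0 for all u ≠ 0). Let g : W → W be a linear automorphism with ⟨gu,gv⟩ = ⟨u,v⟩ for all u,v ∈ W, and set J_g = −J∘(g − id_W). Then ker(J_g) ∩ range(J_g) = {0}; consequently J_g maps its image J_g(W) bijectively onto itself, i.e. the restriction of J_g to J_g(W) is well defined and invertible. -/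
/-! Vectors fixed by `g` are `B`-orthogonal to the image of `g - 1`, because
`B w (g u - u) = B (g w) (g u) - B w u = 0` when `g w = w`. Positivity of `B (J u) u` makes `J`
injective, so `J ∘ (g - 1)` has kernel `ker (g - 1)`, and it prevents `J` from sending a nonzero
vector of the orthogonal of a subspace back into that subspace; hence this kernel meets
`J (range (g - 1))` trivially. The map is thus injective on its range, and an injective
endomorphism of an Artinian module is surjective. -/

section

open LinearMap

theorem map_eq_self_of_disjoint_ker {R M : Type*} [Ring R] [AddCommGroup M] [Module R M]
    {f : M →ₗ[R] M} {p : Submodule R M} [IsArtinian R p] (hp : p.map f ≤ p)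
    (hd : Disjoint p (ker f)) : p.map f = p := by
  have hmaps : ∀ x ∈ p, f x ∈ p := Submodule.map_le_iff_le_comap.mp hp
  have hsurj : Function.Surjective (f.restrict hmaps) :=
    IsArtinian.surjective_of_injective_endomorphism _ ((injective_restrict_iff hmaps).mpr hd)
  refine hp.antisymm fun y hy ↦ ?_
  obtain ⟨x, hx⟩ := hsurj ⟨y, hy⟩
  exact ⟨x, x.2, congrArg Subtype.val hx⟩

section Anisotropic

variable {R M N P : Type*} [CommSemiring R] [AddCommMonoid M] [Module R M] [AddCommMonoid N]
  [Module R N] [AddCommMonoid P] [Module R P] {B : M →ₗ[R] N →ₗ[R] P} {J : N →ₗ[R] M}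

theorem ker_eq_bot_of_anisotropic (hJ : ∀ u, B (J u) u = 0 → u = 0) : ker J = ⊥ :=
  ker_eq_bot'.mpr fun u hu ↦ hJ u (by rw [hu, map_zero₂])

theorem disjoint_map_orthogonalBilin_of_anisotropic (hJ : ∀ u, B (J u) u = 0 → u = 0)
    (K : Submodule R M) : Disjoint K ((K.orthogonalBilin B).map J) := by
  rw [Submodule.disjoint_def]
  rintro _ hK ⟨u, hu, rfl⟩
  rw [hJ u (hu (J u) hK), map_zero]

end Anisotropic

section Orthogonal

variable {R M : Type*} [CommRing R] [AddCommGroup M] [Module R M] {B : LinearMap.BilinForm R M}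
  {J g : M →ₗ[R] M}

theorem range_sub_id_le_orthogonalBilin_ker (hg : B.IsOrthogonal g) :
    range (g - .id) ≤ (ker (g - .id)).orthogonalBilin B := by
  rintro _ ⟨u, rfl⟩ w hw
  have hfix : g w = w := sub_eq_zero.mp hw
  calc B w (g u - u) = B (g w) (g u) - B w u := by rw [hfix, map_sub]
    _ = 0 := sub_eq_zero.mpr (hg w u)

theorem disjoint_ker_range_comp_sub_id (hJ : ∀ u, B (J u) u = 0 → u = 0)
    (hg : B.IsOrthogonal g) : Disjoint (ker (J ∘ₗ (g - .id))) (range (J ∘ₗ (g - .id))) := by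
  rw [ker_comp_of_ker_eq_bot _ (ker_eq_bot_of_anisotropic hJ), range_comp]
  exact (disjoint_map_orthogonalBilin_of_anisotropic hJ _).mono_right
    (Submodule.map_mono (range_sub_id_le_orthogonalBilin_ker hg))

theorem Jg_invertible_on_image_general [IsArtinian R M] (hJ : ∀ u, B (J u) u = 0 → u = 0)
    (hg : B.IsOrthogonal g) {Jg : M →ₗ[R] M} (hJg : Jg = -(J ∘ₗ (g - .id))) :
    ker Jg ⊓ range Jg = ⊥ ∧ (range Jg).map Jg = range Jg := by
  have hdisj : Disjoint (ker Jg) (range Jg) := by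
    rw [hJg, ker_neg, range_neg]
    exact disjoint_ker_range_comp_sub_id hJ hg
  exact ⟨hdisj.eq_bot, map_eq_self_of_disjoint_ker map_le_range hdisj.symm⟩

end Orthogonal

end

/-- Let `W` be a finite-dimensional real symplectic space with compatible
positive complex structure `J` (so that `β(u,v) = B(Ju,v)` is positive
definite) and `g` a symplectic automorphism.  Then for `J_g = -J∘(g - id)`
one has `ker J_g ∩ range J_g = 0`, and consequently `J_g` maps its image
`J_g(W)` bijectively onto itself. -/
theorem Jg_invertible_on_image (W : Type*) [AddCommGroup W] [Module ℝ W]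
    [FiniteDimensional ℝ W]
    (B : W →ₗ[ℝ] W →ₗ[ℝ] ℝ) (halt : ∀ w, B w w = 0)
    (J : W →ₗ[ℝ] W) (hJ2 : J ∘ₗ J = -LinearMap.id)
    (hJsp : ∀ u v, B (J u) v + B u (J v) = 0)
    (hpos : ∀ u : W, u ≠ 0 → 0 < B (J u) u)
    (g : W ≃ₗ[ℝ] W) (hg : ∀ u v, B (g u) (g v) = B u v)
    (Jg : W →ₗ[ℝ] W)
    (hJg : Jg = -(J ∘ₗ ((g : W →ₗ[ℝ] W) - LinearMap.id))) :
    LinearMap.ker Jg ⊓ LinearMap.range Jg = ⊥ ∧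
      Submodule.map Jg (LinearMap.range Jg) = LinearMap.range Jg :=
  Jg_invertible_on_image_general (fun u hu ↦ by_contra fun hne ↦ (hpos u hne).ne' hu) hg hJg
end

section
/- Let a, b be integers with b ≤ 0 and a + b ≥ 2. Then for every real number y > 0: ∫_ℝ (1 + ix)^{−a} (1 − ix)^{−b} e^{−iπxy} dx = 0. (The integrand is integrable since |(1+ix)^{−a}(1−ix)^{−b}| = (1+x²)^{−(a+b)/2} ≤ (1+x²)^{−1}.) -/
open MeasureTheory

/-!
On the closed lower half-plane `1 + iz` has positive real part, so the integrand extends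
holomorphically there. The exponential is bounded by `1` on that half-plane, hence the extension is
`O(|z|^{-r})` with `r = Re a + b > 1`. By Cauchy's theorem on `[-R, R] × [-R, 0]`, the integral over
`[-R, R]` equals the integral over the three other sides, which have total length `4R` and on which
the extension is `o(1/R)`.
-/

open Filter Asymptotics Bornology Set
open scoped Topology

lemma integrable_of_isBigO_norm_rpow {V E : Type*} [NormedAddCommGroup V] [NormedSpace ℝ V]
    [FiniteDimensional ℝ V] [MeasurableSpace V] [BorelSpace V] {μ : Measure V}
    [μ.IsAddHaarMeasure] [NormedAddCommGroup E] {f : V → E} {r : ℝ}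
    (hf : LocallyIntegrable f μ) (hr : Module.finrank ℝ V < r)
    (hdecay : f =O[cobounded V] fun x => ‖x‖ ^ (-r)) : Integrable f μ := by
  have hnorm : (fun x : V => ‖x‖) =Θ[cobounded V] fun x => 1 + ‖x‖ :=
    ((isLittleO_const_id_atTop (1 : ℝ)).comp_tendsto
      tendsto_norm_cobounded_atTop).right_isTheta_add
  have hrpow : (fun x : V => ‖x‖ ^ (-r)) =Θ[cobounded V] fun x => (1 + ‖x‖) ^ (-r) :=
    hnorm.rpow (.of_forall fun _ => norm_nonneg _) (.of_forall fun _ => by positivity)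
  have : ProperSpace V := FiniteDimensional.proper_real V
  rw [Metric.cobounded_eq_cocompact] at hdecay hrpow
  exact hf.integrable_of_isBigO_cocompact (hdecay.trans hrpow.isBigO)
    ((integrable_one_add_norm hr).integrableAtFilter _)

lemma isLittleO_norm_rpow_neg_inv_cobounded {𝕜 : Type*} [NormedField 𝕜] {r : ℝ} (hr : 1 < r) :
    (fun z : 𝕜 => ‖z‖ ^ (-r)) =o[cobounded 𝕜] fun z => z⁻¹ := by
  have hsmall : (fun z : 𝕜 => ‖z‖ ^ (-(r - 1))) =o[cobounded 𝕜] fun _ => (1 : ℝ) :=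
    (isLittleO_one_iff ℝ).2
      ((tendsto_rpow_neg_atTop (sub_pos.2 hr)).comp tendsto_norm_cobounded_atTop)
  have hinv : (fun z : 𝕜 => ‖z‖⁻¹) =O[cobounded 𝕜] fun z => z⁻¹ :=
    isBigO_of_le _ fun z => by simp
  refine IsLittleO.of_norm_right ((hsmall.mul_isBigO hinv.norm_right).congr' ?_ (by simp))
  filter_upwards [tendsto_norm_cobounded_atTop.eventually_gt_atTop 0] with z hz
  rw [← Real.rpow_neg_one, ← Real.rpow_add hz]
  ring_nf

lemma norm_exp_neg_I_mul_le_one {ξ : ℝ} (hξ : 0 ≤ ξ) {z : ℂ} (hz : z.im ≤ 0) :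
    ‖Complex.exp (-(Complex.I * ξ * z))‖ ≤ 1 := by
  have hre : (-(Complex.I * ξ * z)).re = ξ * z.im := by simp
  rw [Complex.norm_exp, Real.exp_le_one_iff, hre]
  exact mul_nonpos_of_nonneg_of_nonpos hξ hz

section LowerHalfPlane

variable {E : Type*} [NormedAddCommGroup E] {f : ℂ → E} {r : ℝ}

lemma integrable_ofReal_of_isBigO_lowerHalfPlane (hf : ContinuousOn f {z | z.im ≤ 0})
    (hr : 1 < r) (hdecay : f =O[cobounded ℂ ⊓ 𝓟 {z | z.im ≤ 0}] fun z => ‖z‖ ^ (-r)) :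
    Integrable fun x : ℝ => f x := by
  have hcont : Continuous fun x : ℝ => f x :=
    hf.comp_continuous Complex.continuous_ofReal fun _ => by simp
  have hreal : Tendsto ((↑) : ℝ → ℂ) (cobounded ℝ) (cobounded ℂ ⊓ 𝓟 {z | z.im ≤ 0}) :=
    tendsto_inf.2 ⟨RCLike.tendsto_ofReal_cobounded_cobounded ℂ,
      tendsto_principal.2 (.of_forall fun _ => by simp)⟩
  refine integrable_of_isBigO_norm_rpow hcont.locallyIntegrable (r := r) (by simpa using hr) ?_
  simpa [Function.comp_def] using hdecay.comp_tendsto hreal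

variable [NormedSpace ℂ E]

lemma intervalIntegral_eq_of_diffContOnCl_lowerHalfPlane
    (hf : DiffContOnCl ℂ f {z | z.im < 0}) {R : ℝ} (hR : 0 ≤ R) :
    ∫ x in (-R)..R, f x =
      (∫ x in (-R)..R, f (x + (-R : ℝ) * Complex.I)) +
        Complex.I • (∫ t in (-R)..0, f (R + t * Complex.I)) -
        Complex.I • (∫ t in (-R)..0, f ((-R : ℝ) + t * Complex.I)) := by
  have hcauchy := Complex.integral_boundary_rect_eq_zero_of_continuousOn_of_differentiableOn f
    ⟨-R, -R⟩ ⟨R, 0⟩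
    (hf.continuousOn.mono fun z hz => by
      simpa using (uIcc_of_le (neg_nonpos.2 hR) ▸ hz.2 : z.im ∈ Icc (-R) 0).2)
    (hf.differentiableOn.mono fun z hz => by
      simpa using (max_eq_right (neg_nonpos.2 hR) ▸ hz.2.2 : z.im < 0))
  simp only [Complex.ofReal_zero, zero_mul, add_zero] at hcauchy
  rw [← sub_eq_zero, ← neg_eq_zero, ← hcauchy]
  abel

lemma norm_intervalIntegral_le_of_diffContOnCl_lowerHalfPlane
    (hf : DiffContOnCl ℂ f {z | z.im < 0}) {R C : ℝ} (hR : 0 ≤ R)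
    (hC : ∀ z : ℂ, z.im ≤ 0 → R ≤ ‖z‖ → ‖f z‖ ≤ C) :
    ‖∫ x in (-R)..R, f x‖ ≤ 4 * R * C := by
  have hbottom : ‖∫ x in (-R)..R, f (x + (-R : ℝ) * Complex.I)‖ ≤ C * |R - -R| := by
    refine intervalIntegral.norm_integral_le_of_norm_le_const fun x _ => hC _ (by simp [hR]) ?_
    simpa [abs_of_nonneg hR] using Complex.abs_im_le_norm (x + (-R : ℝ) * Complex.I)
  have hside (s : ℝ) (hs : |s| = R) :
      ‖∫ t in (-R)..0, f (s + t * Complex.I)‖ ≤ C * |0 - -R| := by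
    refine intervalIntegral.norm_integral_le_of_norm_le_const fun t ht => hC _ ?_ ?_
    · simpa using (uIoc_of_le (neg_nonpos.2 hR) ▸ ht).2
    · simpa [hs] using Complex.abs_re_le_norm (s + t * Complex.I)
  have hright := hside R (abs_of_nonneg hR)
  have hleft := hside (-R) (by rw [abs_neg, abs_of_nonneg hR])
  rw [intervalIntegral_eq_of_diffContOnCl_lowerHalfPlane hf hR]
  calc
    _ ≤ ‖∫ x in (-R)..R, f (x + (-R : ℝ) * Complex.I)‖ +
          ‖∫ t in (-R)..0, f (R + t * Complex.I)‖ +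
          ‖∫ t in (-R)..0, f ((-R : ℝ) + t * Complex.I)‖ := by
      refine (norm_sub_le _ _).trans ?_
      rw [norm_smul, Complex.norm_I, one_mul]
      gcongr
      refine (norm_add_le _ _).trans_eq ?_
      rw [norm_smul, Complex.norm_I, one_mul]
    _ ≤ C * |R - -R| + C * |0 - -R| + C * |0 - -R| := by gcongr
    _ = 4 * R * C := by
      rw [abs_of_nonneg (by linarith), abs_of_nonneg (by linarith)]
      ring

theorem tendsto_intervalIntegral_zero_of_isLittleO_lowerHalfPlane
    (hf : DiffContOnCl ℂ f {z | z.im < 0})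
    (hdecay : f =o[cobounded ℂ ⊓ 𝓟 {z | z.im ≤ 0}] fun z => z⁻¹) :
    Tendsto (fun R : ℝ => ∫ x in (-R)..R, f x) atTop (𝓝 0) := by
  refine (isLittleO_one_iff ℝ).1 (isLittleO_iff.2 fun ε hε => ?_)
  obtain ⟨R₀, -, hR₀⟩ := (hasBasis_cobounded_norm.inf_principal _).eventually_iff.1
    (hdecay.def (show 0 < ε / 4 by positivity))
  filter_upwards [eventually_ge_atTop R₀, eventually_gt_atTop 0] with R hR hRpos
  have hbound (z : ℂ) (hz : z.im ≤ 0) (hRz : R ≤ ‖z‖) : ‖f z‖ ≤ ε / 4 * R⁻¹ := by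
    refine (hR₀ ⟨hR.trans hRz, hz⟩).trans ?_
    rw [norm_inv]
    gcongr
  calc
    ‖∫ x in (-R)..R, f x‖ ≤ 4 * R * (ε / 4 * R⁻¹) :=
      norm_intervalIntegral_le_of_diffContOnCl_lowerHalfPlane hf hRpos.le hbound
    _ = ε * ‖(1 : ℝ)‖ := by
      rw [norm_one]
      field_simp

theorem integral_eq_zero_of_isBigO_lowerHalfPlane (hf : DiffContOnCl ℂ f {z | z.im < 0})
    (hr : 1 < r) (hdecay : f =O[cobounded ℂ ⊓ 𝓟 {z | z.im ≤ 0}] fun z => ‖z‖ ^ (-r)) :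
    ∫ x : ℝ, f x = 0 := by
  have hint : Integrable fun x : ℝ => f x :=
    integrable_ofReal_of_isBigO_lowerHalfPlane
      (by simpa using hf.continuousOn) hr hdecay
  refine tendsto_nhds_unique
    (intervalIntegral_tendsto_integral hint tendsto_neg_atTop_atBot tendsto_id) ?_
  exact tendsto_intervalIntegral_zero_of_isLittleO_lowerHalfPlane hf
    (hdecay.trans_isLittleO ((isLittleO_norm_rpow_neg_inv_cobounded hr).mono inf_le_left))

theorem integral_exp_smul_eq_zero_of_isBigO_lowerHalfPlane
    (hf : DiffContOnCl ℂ f {z | z.im < 0}) (hr : 1 < r)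
    (hdecay : f =O[cobounded ℂ ⊓ 𝓟 {z | z.im ≤ 0}] fun z => ‖z‖ ^ (-r)) {ξ : ℝ} (hξ : 0 ≤ ξ) :
    ∫ x : ℝ, Complex.exp (-(Complex.I * ξ * x)) • f x = 0 := by
  have hexp : Differentiable ℂ fun z : ℂ => Complex.exp (-(Complex.I * ξ * z)) := by fun_prop
  refine integral_eq_zero_of_isBigO_lowerHalfPlane
    (f := fun z => Complex.exp (-(Complex.I * ξ * z)) • f z) (hexp.diffContOnCl.smul hf) hr ?_
  refine IsBigO.trans (.of_bound 1 ?_) hdecay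
  filter_upwards [mem_inf_of_right (mem_principal_self _)] with z hz
  rw [norm_smul]
  gcongr
  exact norm_exp_neg_I_mul_le_one hξ hz

end LowerHalfPlane

lemma isTheta_const_add_mul_const_cobounded {𝕜 : Type*} [NormedField 𝕜] (a : 𝕜) {c : 𝕜}
    (hc : c ≠ 0) : (fun z => a + z * c) =Θ[cobounded 𝕜] fun z => z :=
  (isLittleO_const_id_cobounded a).add_isTheta
    ⟨by simpa only [mul_comm] using! isBigO_const_mul_self c _ _,
      by simpa only [mul_comm] using! isBigO_self_const_mul hc _ _⟩

lemma one_add_mul_I_mem_slitPlane {z : ℂ} (hz : z.im ≤ 0) :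
    1 + z * Complex.I ∈ Complex.slitPlane :=
  Or.inl (by simp; linarith)

lemma diffContOnCl_cpow_mul_pow (s : ℂ) (n : ℕ) :
    DiffContOnCl ℂ (fun z => (1 + z * Complex.I) ^ s * (1 - z * Complex.I) ^ n)
      {z | z.im < 0} := by
  refine DifferentiableOn.diffContOnCl fun z hz => DifferentiableAt.differentiableWithinAt ?_
  rw [Complex.closure_setOfPred_im_lt] at hz
  have hbase : DifferentiableAt ℂ (fun z => 1 + z * Complex.I) z := by fun_prop
  exact (hbase.cpow_const (one_add_mul_I_mem_slitPlane hz)).mul (by fun_prop)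

lemma isBigO_cpow_mul_pow_cobounded (s : ℂ) (n : ℕ) :
    (fun z : ℂ => (1 + z * Complex.I) ^ s * (1 - z * Complex.I) ^ n) =O[cobounded ℂ]
      fun z => ‖z‖ ^ (s.re + n) := by
  have hcpow : (fun z : ℂ => (1 + z * Complex.I) ^ s) =O[cobounded ℂ] fun z => ‖z‖ ^ s.re :=
    (Complex.isBigO_cpow_rpow isBoundedUnder_const).trans
      ((isTheta_const_add_mul_const_cobounded 1 Complex.I_ne_zero).norm_left.norm_right.rpow
        (.of_forall fun _ => norm_nonneg _) (.of_forall fun _ => norm_nonneg _)).isBigO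
  have hpow : (fun z : ℂ => (1 - z * Complex.I) ^ n) =O[cobounded ℂ] fun z => ‖z‖ ^ n := by
    simpa [sub_eq_add_neg] using (isTheta_const_add_mul_const_cobounded (1 : ℂ)
      (neg_ne_zero.2 Complex.I_ne_zero)).isBigO.norm_right.pow n
  refine (hcpow.mul hpow).congr' .rfl ?_
  filter_upwards [tendsto_norm_cobounded_atTop.eventually_gt_atTop 0] with z hz
  rw [Real.rpow_add hz, Real.rpow_natCast]

theorem fourier_vanishes_pos_general (a : ℂ) (b : ℤ) (hb : b ≤ 0) (hab : 1 < a.re + b)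
    (y : ℝ) (hy : 0 ≤ y) :
    ∫ x : ℝ,
        ((1 : ℂ) + x * Complex.I) ^ (-a) * ((1 : ℂ) - x * Complex.I) ^ (-b) *
          Complex.exp (-(Complex.I * Real.pi * x * y)) = 0 := by
  obtain ⟨n, rfl⟩ : ∃ n : ℕ, b = -n := ⟨b.natAbs, by omega⟩
  have hdecay := (isBigO_cpow_mul_pow_cobounded (-a) n).mono
    (inf_le_left : cobounded ℂ ⊓ 𝓟 {z | z.im ≤ 0} ≤ _)
  have hvanish := integral_exp_smul_eq_zero_of_isBigO_lowerHalfPlane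
    (diffContOnCl_cpow_mul_pow (-a) n) (r := a.re - n) (by push_cast at hab; linarith)
    (by simpa [add_comm, sub_eq_add_neg] using hdecay)
    (show 0 ≤ Real.pi * y by positivity)
  rw [← hvanish]
  refine integral_congr_ae (.of_forall fun x => ?_)
  simp only [neg_neg, zpow_natCast, smul_eq_mul, Complex.ofReal_mul]
  ring_nf

/-- Vanishing of the one-variable Fourier transform underlying the support
computations: for integers `b ≤ 0` and `a + b ≥ 2`, the integral
`∫_ℝ (1+ix)^{-a} (1-ix)^{-b} e^{-iπxy} dx` vanishes for every `y > 0`. -/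
theorem fourier_vanishes_pos (a b : ℤ) (hb : b ≤ 0) (hab : 2 ≤ a + b)
    (y : ℝ) (hy : 0 < y) :
    ∫ x : ℝ,
        ((1 : ℂ) + x * Complex.I) ^ (-a) * ((1 : ℂ) - x * Complex.I) ^ (-b) *
          Complex.exp (-(Complex.I * Real.pi * x * y)) = 0 := by
  have hab' : 1 < (a : ℂ).re + b := by rw [Complex.intCast_re]; exact_mod_cast hab
  simpa only [← Int.cast_neg, Complex.cpow_intCast] using
    fourier_vanishes_pos_general a b hb hab' y hy.le
end

section
/- Let a, b be integers with a ≤ 0 and a + b ≥ 2. Then for every real number y < 0: ∫_ℝ (1 + ix)^{−a} (1 − ix)^{−b} e^{−iπxy} dx = 0. (The integrand is integrable since |(1+ix)^{−a}(1−ix)^{−b}| = (1+x²)^{−(a+b)/2} ≤ (1+x²)^{−1}.) -/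
open MeasureTheory

/-!
As `a ≤ 0`, the function `(1 + iz)^{-a} (1 - iz)^{-b}` has its only possible pole at `z = -i`. In
the closed upper half-plane `|1 + iz| ≤ |1 - iz|`, so `a + b ≥ 2` makes it `O(|z|^{-2})` there, and
`|e^{-iπzy}| ≤ 1` because `y < 0`. Cauchy's theorem on the rectangle with vertices `±R`, `±R + iR`
moves the integral over `[-R, R]` to three sides of total length `4R`, on which the integrand is
`o(1/R)`.
-/

section HalfPlane

open Complex Filter Bornology Asymptotics

variable {E : Type*} [NormedAddCommGroup E] [NormedSpace ℂ E] {f : ℂ → E}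

lemma intervalIntegral_eq_integral_other_sides (hf : DiffContOnCl ℂ f {z | 0 < z.im}) {R : ℝ}
    (hR : 0 ≤ R) :
    ∫ x in -R..R, f x = (∫ x in -R..R, f (x + R * I))
      - I • (∫ y in 0..R, f (R + y * I)) + I • ∫ y in 0..R, f ((-R : ℝ) + y * I) := by
  have hcont : ContinuousOn f {z | 0 ≤ z.im} := by
    simpa only [closure_setOfPred_lt_im] using hf.continuousOn
  have cauchy := integral_boundary_rect_eq_zero_of_continuousOn_of_differentiableOn f
    ⟨-R, 0⟩ ⟨R, R⟩
    (hcont.mono fun z hz ↦ (Set.uIcc_of_le hR ▸ hz.2 : z.im ∈ Set.Icc 0 R).1)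
    (hf.differentiableOn.mono fun z hz ↦ (min_eq_left hR ▸ hz.2.1 : 0 < z.im))
  simp only [ofReal_zero, zero_mul, add_zero] at cauchy
  rw [← sub_eq_zero, ← cauchy]
  abel

lemma norm_intervalIntegral_le_of_norm_le (hf : DiffContOnCl ℂ f {z | 0 < z.im}) {R C : ℝ}
    (hR : 0 ≤ R) (hC : ∀ z : ℂ, 0 ≤ z.im → R ≤ ‖z‖ → ‖f z‖ ≤ C) :
    ‖∫ x in -R..R, f x‖ ≤ 4 * R * C := by
  have top : ‖∫ x in -R..R, f (x + R * I)‖ ≤ C * |R - -R| := by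
    refine intervalIntegral.norm_integral_le_of_norm_le_const fun x _ ↦ hC _ (by simpa) ?_
    simpa [abs_of_nonneg hR] using abs_im_le_norm (x + R * I)
  have side (s : ℝ) (hs : |s| = R) : ‖∫ y in 0..R, f (s + y * I)‖ ≤ C * |R - 0| := by
    refine intervalIntegral.norm_integral_le_of_norm_le_const fun y hy ↦ hC _ ?_ ?_
    · simpa using (Set.uIoc_of_le hR ▸ hy).1.le
    · simpa [hs] using abs_re_le_norm (s + y * I)
  calc ‖∫ x in -R..R, f x‖
      ≤ ‖∫ x in -R..R, f (x + R * I)‖ + ‖I • ∫ y in 0..R, f (R + y * I)‖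
          + ‖I • ∫ y in 0..R, f ((-R : ℝ) + y * I)‖ := by
        rw [intervalIntegral_eq_integral_other_sides hf hR]
        exact norm_add_le_of_le (norm_sub_le _ _) le_rfl
    _ ≤ C * |R - -R| + C * |R - 0| + C * |R - 0| := by
        simp only [norm_smul, norm_I, one_mul]
        gcongr
        exacts [side R (abs_of_nonneg hR), side (-R) (by rw [abs_neg, abs_of_nonneg hR])]
    _ = 4 * R * C := by
        rw [sub_neg_eq_add, sub_zero, abs_of_nonneg hR, abs_of_nonneg (add_nonneg hR hR)]
        ring

theorem tendsto_intervalIntegral_zero_of_isLittleO_inv (hf : DiffContOnCl ℂ f {z | 0 < z.im})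
    (hdecay : f =o[cobounded ℂ ⊓ 𝓟 {z | 0 ≤ z.im}] fun z ↦ z⁻¹) :
    Tendsto (fun R : ℝ ↦ ∫ x in -R..R, f x) atTop (nhds 0) := by
  refine NormedAddGroup.tendsto_nhds_zero.2 fun ε hε ↦ ?_
  obtain ⟨r, -, hr⟩ := hasBasis_cobounded_norm.eventually_iff.1 <|
    eventually_inf_principal.1 (hdecay.bound (show 0 < ε / 8 by positivity))
  filter_upwards [eventually_ge_atTop r, eventually_gt_atTop 0] with R hrR hR
  have hC (z : ℂ) (hz : 0 ≤ z.im) (hRz : R ≤ ‖z‖) : ‖f z‖ ≤ ε / 8 * R⁻¹ :=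
    calc ‖f z‖ ≤ ε / 8 * ‖z⁻¹‖ := hr (hrR.trans hRz) hz
      _ ≤ ε / 8 * R⁻¹ := by
        rw [norm_inv]
        gcongr
  calc ‖∫ x in -R..R, f x‖ ≤ 4 * R * (ε / 8 * R⁻¹) :=
        norm_intervalIntegral_le_of_norm_le hf hR.le hC
    _ = ε / 2 := by
        field_simp
        norm_num
    _ < ε := half_lt_self hε

theorem integral_eq_zero_of_isLittleO_inv (hf : DiffContOnCl ℂ f {z | 0 < z.im})
    (hdecay : f =o[cobounded ℂ ⊓ 𝓟 {z | 0 ≤ z.im}] fun z ↦ z⁻¹)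
    (hint : Integrable fun x : ℝ ↦ f x) : ∫ x : ℝ, f x = 0 :=
  tendsto_nhds_unique
    (intervalIntegral_tendsto_integral hint tendsto_neg_atTop_atBot tendsto_id)
    (tendsto_intervalIntegral_zero_of_isLittleO_inv hf hdecay)

lemma norm_exp_ofReal_mul_mul_I_le_one {t : ℝ} (ht : 0 ≤ t) {z : ℂ} (hz : 0 ≤ z.im) :
    ‖exp (t * z * I)‖ ≤ 1 := by
  rw [norm_exp, Real.exp_le_one_iff]
  simpa using mul_nonneg ht hz

theorem integral_exp_smul_eq_zero_of_isLittleO_inv (hf : DiffContOnCl ℂ f {z | 0 < z.im})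
    (hdecay : f =o[cobounded ℂ ⊓ 𝓟 {z | 0 ≤ z.im}] fun z ↦ z⁻¹)
    (hint : Integrable fun x : ℝ ↦ f x) {t : ℝ} (ht : 0 ≤ t) :
    ∫ x : ℝ, exp (t * x * I) • f x = 0 := by
  have hexp : Differentiable ℂ fun z : ℂ ↦ exp (t * z * I) := by fun_prop
  have hbound : (fun z : ℂ ↦ exp (t * z * I)) =O[cobounded ℂ ⊓ 𝓟 {z | 0 ≤ z.im}]
      fun _ ↦ (1 : ℂ) := by
    refine .of_bound' (eventually_inf_principal.2 (.of_forall fun z hz ↦ ?_))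
    simpa using norm_exp_ofReal_mul_mul_I_le_one ht hz
  refine integral_eq_zero_of_isLittleO_inv (f := fun z ↦ exp (t * z * I) • f z)
    (hexp.diffContOnCl.smul hf) ?_ ?_
  · simpa using hbound.smul_isLittleO hdecay
  · exact hint.bdd_smul 1 (Continuous.aestronglyMeasurable (by fun_prop))
      (.of_forall fun x ↦ norm_exp_ofReal_mul_mul_I_le_one ht (ofReal_im x).ge)

lemma sq_norm_one_sub_mul_I (z : ℂ) : ‖1 - z * I‖ ^ 2 = ‖z‖ ^ 2 + 2 * z.im + 1 := by
  simp only [Complex.sq_norm, normSq_apply, sub_re, sub_im, one_re, one_im, mul_I_re, mul_I_im]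
  ring

lemma norm_one_add_mul_I_le_norm_one_sub_mul_I {z : ℂ} (hz : 0 ≤ z.im) :
    ‖1 + z * I‖ ≤ ‖1 - z * I‖ := by
  have hneg : ‖1 + z * I‖ ^ 2 = ‖z‖ ^ 2 - 2 * z.im + 1 := by
    simpa [← sub_eq_add_neg] using sq_norm_one_sub_mul_I (-z)
  refine le_of_sq_le_sq ?_ (norm_nonneg _)
  linarith [sq_norm_one_sub_mul_I z]

lemma one_le_norm_one_sub_mul_I {z : ℂ} (hz : 0 ≤ z.im) : 1 ≤ ‖1 - z * I‖ :=
  calc 1 ≤ (1 - z * I).re := by simpa using hz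
    _ ≤ ‖1 - z * I‖ := re_le_norm _

lemma norm_le_norm_one_sub_mul_I {z : ℂ} (hz : 0 ≤ z.im) : ‖z‖ ≤ ‖1 - z * I‖ := by
  refine le_of_sq_le_sq ?_ (norm_nonneg _)
  linarith [sq_norm_one_sub_mul_I z]

/-- The extension to complex `z` of the function `(1 + ix)^{-a} (1 - ix)^{-b}` whose Fourier
transform is taken; at a pole its value is `0`, by the convention for negative powers of `0`. -/
noncomputable def zpowKernel (a b : ℤ) (z : ℂ) : ℂ :=
  (1 + z * I) ^ (-a) * (1 - z * I) ^ (-b)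

variable {a b : ℤ}

lemma norm_zpowKernel_le (ha : a ≤ 0) {z : ℂ} (hz : 0 ≤ z.im) :
    ‖zpowKernel a b z‖ ≤ ‖1 - z * I‖ ^ (-(a + b)) := by
  have hpos : 0 < ‖1 - z * I‖ := one_pos.trans_le (one_le_norm_one_sub_mul_I hz)
  rw [zpowKernel, norm_mul, norm_zpow, norm_zpow, neg_add, zpow_add₀ hpos.ne']
  gcongr
  exact zpow_le_zpow_left₀ (neg_nonneg.2 ha) (norm_nonneg _)
    (norm_one_add_mul_I_le_norm_one_sub_mul_I hz)

lemma norm_zpowKernel_le_inv_sq (ha : a ≤ 0) (hab : 2 ≤ a + b) {z : ℂ} (hz : 0 ≤ z.im) :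
    ‖zpowKernel a b z‖ ≤ (‖1 - z * I‖ ^ 2)⁻¹ :=
  calc ‖zpowKernel a b z‖ ≤ ‖1 - z * I‖ ^ (-(a + b)) := norm_zpowKernel_le ha hz
    _ ≤ ‖1 - z * I‖ ^ (-2 : ℤ) :=
      zpow_le_zpow_right₀ (one_le_norm_one_sub_mul_I hz) (neg_le_neg hab)
    _ = (‖1 - z * I‖ ^ 2)⁻¹ := by
      rw [zpow_neg, zpow_ofNat]

lemma differentiableOn_zpowKernel (ha : a ≤ 0) :
    DifferentiableOn ℂ (zpowKernel a b) {z | 0 ≤ z.im} := by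
  intro z hz
  have hne : 1 - z * I ≠ 0 := norm_pos_iff.1 (one_pos.trans_le (one_le_norm_one_sub_mul_I hz))
  refine DifferentiableAt.differentiableWithinAt (.mul ?_ ?_)
  · exact .zpow (by fun_prop) (.inr (neg_nonneg.2 ha))
  · exact .zpow (by fun_prop) (.inl hne)

lemma diffContOnCl_zpowKernel (ha : a ≤ 0) : DiffContOnCl ℂ (zpowKernel a b) {z | 0 < z.im} := by
  apply DifferentiableOn.diffContOnCl
  simpa only [closure_setOfPred_lt_im] using differentiableOn_zpowKernel ha

lemma isLittleO_zpowKernel_inv (ha : a ≤ 0) (hab : 2 ≤ a + b) :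
    zpowKernel a b =o[cobounded ℂ ⊓ 𝓟 {z | 0 ≤ z.im}] fun z ↦ z⁻¹ := by
  have hbigO : zpowKernel a b =O[cobounded ℂ ⊓ 𝓟 {z | 0 ≤ z.im}] fun z ↦ z⁻¹ * z⁻¹ := by
    refine .of_bound' ?_
    filter_upwards [mem_inf_of_left (eventually_ne_cobounded 0),
      mem_inf_of_right (mem_principal_self _)] with z hz₀ hz
    calc ‖zpowKernel a b z‖ ≤ (‖1 - z * I‖ ^ 2)⁻¹ := norm_zpowKernel_le_inv_sq ha hab hz
      _ ≤ (‖z‖ ^ 2)⁻¹ := by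
        gcongr
        exact norm_le_norm_one_sub_mul_I hz
      _ = ‖z⁻¹ * z⁻¹‖ := by rw [norm_mul, norm_inv, sq, mul_inv]
  have hinv : (fun z : ℂ ↦ z⁻¹) =o[cobounded ℂ ⊓ 𝓟 {z | 0 ≤ z.im}] fun _ ↦ (1 : ℂ) :=
    (isLittleO_one_iff ℂ).2 (tendsto_inv₀_cobounded.mono_left inf_le_left)
  simpa using hbigO.trans_isLittleO (hinv.mul_isBigO (isBigO_refl (fun z : ℂ ↦ z⁻¹) _))

lemma integrable_zpowKernel (ha : a ≤ 0) (hab : 2 ≤ a + b) :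
    Integrable fun x : ℝ ↦ zpowKernel a b x := by
  have hcont : Continuous fun x : ℝ ↦ zpowKernel a b x :=
    (differentiableOn_zpowKernel ha).continuousOn.comp_continuous continuous_ofReal
      fun x ↦ (ofReal_im x).ge
  refine integrable_inv_one_add_sq.mono' hcont.aestronglyMeasurable (.of_forall fun x ↦ ?_)
  calc ‖zpowKernel a b x‖ ≤ (‖1 - x * I‖ ^ 2)⁻¹ :=
        norm_zpowKernel_le_inv_sq ha hab (ofReal_im x).ge
    _ = (1 + x ^ 2)⁻¹ := by
        rw [sq_norm_one_sub_mul_I, norm_real, Real.norm_eq_abs, sq_abs, ofReal_im, mul_zero,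
          add_zero, add_comm]

end HalfPlane

/-- Vanishing of the one-variable Fourier transform underlying the support
computations: for integers `a ≤ 0` and `a + b ≥ 2`, the integral
`∫_ℝ (1+ix)^{-a} (1-ix)^{-b} e^{-iπxy} dx` vanishes for every `y < 0`. -/
theorem fourier_vanishes_neg (a b : ℤ) (ha : a ≤ 0) (hab : 2 ≤ a + b)
    (y : ℝ) (hy : y < 0) :
    ∫ x : ℝ,
        ((1 : ℂ) + x * Complex.I) ^ (-a) * ((1 : ℂ) - x * Complex.I) ^ (-b) *
          Complex.exp (-(Complex.I * Real.pi * x * y)) = 0 := by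
  have hfreq : 0 ≤ -(Real.pi * y) :=
    neg_nonneg.2 (mul_nonpos_of_nonneg_of_nonpos Real.pi_pos.le hy.le)
  have hintegrand (x : ℝ) :
      ((1 : ℂ) + x * Complex.I) ^ (-a) * ((1 : ℂ) - x * Complex.I) ^ (-b) *
          Complex.exp (-(Complex.I * Real.pi * x * y)) =
        Complex.exp (↑(-(Real.pi * y)) * x * Complex.I) • zpowKernel a b x := by
    rw [smul_eq_mul, mul_comm, zpowKernel]
    congr 2
    push_cast
    ring
  simp_rw [hintegrand]
  exact integral_exp_smul_eq_zero_of_isLittleO_inv (diffContOnCl_zpowKernel ha)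
    (isLittleO_zpowKernel_inv ha hab) (integrable_zpowKernel ha hab) hfreq
end
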